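/- arXiv:2504.03903 — 2 statements merged into one kernel-verified Lean document; each statement's English description precedes it below -/
import Mathlib

section
/- Let d ∈ ℕ and f ∈ L¹([0,1]^d). Then for every Schwartz function η ∈ 𝒮(ℝ^d) the family ( (∫_{[0,1]^d} f c_{k̄}) · (∫_{[0,1]^d} c_{k̄} η) )_{k̄ ∈ ℕ₀^d} is absolutely summable and Σ_{k̄ ∈ ℕ₀^d} (∫_{[0,1]^d} f(x) c_{k̄}(x) dx)(∫_{[0,1]^d} c_{k̄}(x) η(x) dx) = ∫_{[0,1]^d} f(x) η(x) dx. In other words, identifying f with its extension by 0 to ℝ^d, the half-period cosine series of f converges to f weak*-ly in the space of tempered distributions 𝒮′(ℝ^d). -/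
open MeasureTheory Set

/-- Univariate half-period cosine functions: `c₀ ≡ 1`, `c_k(x) = √2 cos(πkx)` for `k ≥ 1`. -/
noncomputable def hpcFun (k : ℕ) (x : ℝ) : ℝ :=
  if k = 0 then 1 else Real.sqrt 2 * Real.cos (Real.pi * (k : ℝ) * x)

/-- Tensorized half-period cosine functions `c_k̄`. -/
noncomputable def hpc (d : ℕ) (k : Fin d → ℕ) (x : Fin d → ℝ) : ℝ :=
  ∏ i, hpcFun (k i) (x i)

/-- Cosine integral of a character. -/
noncomputable def cosInt (a b : ℝ) : ℂ :=
  ∫ x in (0:ℝ)..1, (Real.cos (b * x) : ℂ) * Complex.exp (Complex.I * a * x)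

theorem norm_expI (a x : ℝ) : ‖Complex.exp (Complex.I * a * x)‖ = 1 := by
  rw [show Complex.I * a * x = ((a * x : ℝ) : ℂ) * Complex.I by push_cast; ring]
  exact Complex.norm_exp_ofReal_mul_I _

theorem norm_cosInt_le_one (a b : ℝ) : ‖cosInt a b‖ ≤ 1 := by
  have h := intervalIntegral.norm_integral_le_of_norm_le_const (a := (0:ℝ)) (b := 1) (C := 1)
    (f := fun x : ℝ => (Real.cos (b * x) : ℂ) * Complex.exp (Complex.I * a * x)) (by
      intro x _
      rw [norm_mul, norm_expI, mul_one, Complex.norm_real]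
      exact Real.abs_cos_le_one _)
  simpa [cosInt] using h

theorem cosInt_parts (a b : ℝ) (hb : Real.sin b = 0) :
    ((b : ℂ) ^ 2 - (a : ℂ) ^ 2) * cosInt a b =
      (Real.cos b : ℂ) * (Complex.I * a * Complex.exp (Complex.I * a)) - Complex.I * a := by
  have hder : ∀ x ∈ uIcc (0:ℝ) 1, HasDerivAt
      (fun x : ℝ => (b : ℂ) * (Real.sin (b * x) : ℂ) * Complex.exp (Complex.I * a * x)
        + (Real.cos (b * x) : ℂ) * (Complex.I * a * Complex.exp (Complex.I * a * x)))
      (((b : ℂ) ^ 2 - (a : ℂ) ^ 2) *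
        ((Real.cos (b * x) : ℂ) * Complex.exp (Complex.I * a * x))) x := by
    intro x _
    have h0 : HasDerivAt (fun x : ℝ => b * x) b x := by
      simpa using (hasDerivAt_id x).const_mul b
    have hs : HasDerivAt (fun x : ℝ => (Real.sin (b * x) : ℂ))
        ((Real.cos (b * x) * b : ℝ) : ℂ) x := (h0.sin).ofReal_comp
    have hc : HasDerivAt (fun x : ℝ => (Real.cos (b * x) : ℂ))
        ((-Real.sin (b * x) * b : ℝ) : ℂ) x := (h0.cos).ofReal_comp
    have he : HasDerivAt (fun x : ℝ => Complex.exp (Complex.I * a * x))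
        (Complex.exp (Complex.I * a * x) * (Complex.I * a)) x := by
      have h1 : HasDerivAt (fun x : ℝ => Complex.I * a * (x : ℂ)) (Complex.I * a) x := by
        simpa using (Complex.ofRealCLM.hasDerivAt (x := x)).const_mul (Complex.I * (a : ℂ))
      exact h1.cexp
    convert! ((hs.const_mul (b : ℂ)).mul he).add (hc.mul (he.const_mul (Complex.I * (a : ℂ))))
      using 1
    push_cast
    linear_combination (-(a : ℂ) ^ 2 * Complex.cos (b * x) * Complex.exp (Complex.I * a * x)) *
      Complex.I_sq
  have := intervalIntegral.integral_eq_sub_of_hasDerivAt hder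
    (Continuous.intervalIntegrable (by fun_prop) _ _)
  rw [intervalIntegral.integral_const_mul] at this
  rw [cosInt, this]
  simp [hb]

theorem norm_cosInt_le (a b : ℝ) (hb : Real.sin b = 0) :
    (1 + b ^ 2) * ‖cosInt a b‖ ≤ 2 * (1 + a ^ 2) := by
  have h1 := norm_cosInt_le_one a b
  have h2 := cosInt_parts a b hb
  have h3 : ((b ^ 2 : ℝ) : ℂ) * cosInt a b = ((a ^ 2 : ℝ) : ℂ) * cosInt a b +
      ((Real.cos b : ℂ) * (Complex.I * a * Complex.exp (Complex.I * a)) - Complex.I * a) := by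
    rw [← h2]; push_cast; ring
  have h4 : ‖(Real.cos b : ℂ) * (Complex.I * a * Complex.exp (Complex.I * a))‖ ≤ |a| := by
    have := norm_expI a 1
    rw [Complex.ofReal_one, mul_one] at this
    rw [norm_mul, norm_mul, this, norm_mul, Complex.norm_I, Complex.norm_real, Complex.norm_real,
      mul_one, one_mul]
    exact mul_le_of_le_one_left (abs_nonneg _) (Real.abs_cos_le_one _)
  have h5 : b ^ 2 * ‖cosInt a b‖ ≤ a ^ 2 * ‖cosInt a b‖ + (|a| + |a|) := by
    have := congrArg norm h3
    rw [norm_mul, Complex.norm_real, Real.norm_of_nonneg (sq_nonneg b)] at this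
    rw [this]
    refine (norm_add_le _ _).trans (add_le_add ?_ ((norm_sub_le _ _).trans (add_le_add h4 ?_)))
    · rw [norm_mul, Complex.norm_real, Real.norm_of_nonneg (sq_nonneg a)]
    · simp
  nlinarith [sq_nonneg (|a| - 1), sq_abs a, mul_le_mul_of_nonneg_left h1 (sq_nonneg a)]

theorem cosInt_neg (a b : ℝ) : cosInt a (-b) = cosInt a b := by
  simp [cosInt]

instance fact_two_pos_aux : Fact ((0:ℝ) < 2) := ⟨two_pos⟩

theorem int_split (a : ℝ) (n : ℤ) :
    ∫ x in (-1:ℝ)..1, Complex.exp (-(Complex.I * (Real.pi * n * x : ℝ))) *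
      Complex.exp (Complex.I * a * |x|) = 2 * cosInt a (Real.pi * n) := by
  have hi : ∀ u v : ℝ, IntervalIntegrable (fun x : ℝ =>
      Complex.exp (-(Complex.I * (Real.pi * n * x : ℝ))) *
      Complex.exp (Complex.I * a * |x|)) volume u v :=
    fun u v => Continuous.intervalIntegrable (by fun_prop) _ _
  rw [← intervalIntegral.integral_add_adjacent_intervals (hi (-1) 0) (hi 0 1)]
  have h1 := intervalIntegral.integral_comp_neg (a := (0:ℝ)) (b := 1) (fun x : ℝ =>
      Complex.exp (-(Complex.I * (Real.pi * n * x : ℝ))) *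
      Complex.exp (Complex.I * a * |x|))
  rw [neg_zero] at h1
  rw [← h1, ← intervalIntegral.integral_add
    (Continuous.intervalIntegrable (by fun_prop) _ _) (hi 0 1), cosInt,
    ← intervalIntegral.integral_const_mul]
  refine intervalIntegral.integral_congr fun x hx => ?_
  rw [uIcc_of_le zero_le_one] at hx
  simp only [abs_neg, abs_of_nonneg hx.1]
  rw [Complex.ofReal_cos, Complex.cos]
  push_cast
  rw [show -(Complex.I * (Real.pi * n * -(x:ℂ))) = Real.pi * n * x * Complex.I by ring,
    show -(Complex.I * (Real.pi * n * (x:ℂ))) = -(Real.pi * n * x) * Complex.I by ring]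
  ring

theorem summable_w : Summable (fun k : ℕ => (1 + (k:ℝ) ^ 2)⁻¹) := by
  refine Summable.of_nonneg_of_le (fun k => by positivity) (fun k => ?_)
    ((Real.summable_nat_pow_inv (p := 2)).2 (by norm_num) |>.comp_injective (i := id) Function.injective_id |>.add
      (hasSum_ite_eq (0:ℕ) (1:ℝ)).summable)
  rcases eq_or_ne k 0 with rfl | hk
  · simp
  · simp only [Function.comp, id, hk, if_false, add_zero]
    have : (0:ℝ) < k := by positivity
    gcongr
    linarith

theorem sin_pi_int (n : ℤ) : Real.sin (Real.pi * n) = 0 := by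
  rw [mul_comm]; exact Real.sin_int_mul_pi n

theorem norm_cosInt_le' (a : ℝ) (n : ℤ) :
    ‖cosInt a (Real.pi * n)‖ ≤ 2 * (1 + a ^ 2) * (1 + (n:ℝ) ^ 2)⁻¹ := by
  have h := norm_cosInt_le a (Real.pi * n) (sin_pi_int n)
  rw [← div_eq_mul_inv, le_div_iff₀ (by positivity), mul_comm]
  refine le_trans ?_ h
  have : (1:ℝ) ≤ Real.pi ^ 2 := by nlinarith [Real.pi_gt_three]
  refine mul_le_mul_of_nonneg_right ?_ (norm_nonneg _)
  nlinarith [sq_nonneg (n:ℝ), mul_le_mul_of_nonneg_right this (sq_nonneg (n:ℝ))]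

theorem hasSum_int (a x : ℝ) (hx : x ∈ Icc (0:ℝ) 1) :
    HasSum (fun n : ℤ => cosInt a (Real.pi * n) * Complex.exp (Complex.I * (Real.pi * n * x : ℝ)))
      (Complex.exp (Complex.I * a * x)) := by
  let g : ℝ → ℂ := fun x => Complex.exp (Complex.I * a * |x|)
  have hg : Continuous g := by fun_prop
  let G : C(AddCircle (2:ℝ), ℂ) := ⟨AddCircle.liftIoc 2 (-1) g,
    AddCircle.liftIoc_continuous (by simp only [g]; norm_num) hg.continuousOn⟩
  have hcoeff : ∀ n, fourierCoeff G n = cosInt a (Real.pi * n) := by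
    intro n
    change fourierCoeff (AddCircle.liftIoc 2 (-1) g) n = _
    rw [fourierCoeff_liftIoc_eq, fourierCoeffOn_eq_integral]
    have h2 := int_split a n
    have : ∫ x in (-1:ℝ)..(-1+2), (fourier (-n) (x : AddCircle ((-1:ℝ) + 2 - -1))) • g x =
      2 * cosInt a (Real.pi * n) := by
      rw [← h2]
      norm_num only
      refine intervalIntegral.integral_congr fun x _ => ?_
      simp only [g, fourier_coe_apply, smul_eq_mul]
      congr 2
      push_cast
      ring
    rw [this, Complex.real_smul]
    push_cast
    ring
  have hs : Summable (fourierCoeff G) := by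
    refine Summable.of_norm_bounded (g := fun n : ℤ => 2 * (1 + a ^ 2) * (1 + (n:ℝ) ^ 2)⁻¹) ?_
      (fun n => by rw [hcoeff]; exact norm_cosInt_le' a n)
    refine Summable.mul_left _ ?_
    refine Summable.of_nat_of_neg ?_ ?_
    · simpa using summable_w
    · simpa using summable_w
  have h := has_pointwise_sum_fourier_series_of_summable hs (x : AddCircle (2:ℝ))
  have hGx : G (x : AddCircle (2:ℝ)) = Complex.exp (Complex.I * a * x) := by
    change AddCircle.liftIoc 2 (-1) g x = _
    rw [AddCircle.liftIoc_coe_apply ⟨by linarith [hx.1], by linarith [hx.2]⟩]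
    simp only [g, abs_of_nonneg hx.1]
  rw [hGx] at h
  convert! h using 2 with n
  rw [hcoeff, smul_eq_mul, fourier_coe_apply]
  congr 2
  push_cast
  ring

/-- Cosine coefficients of the character. -/
noncomputable def chCoef (t : ℝ) (k : ℕ) : ℂ :=
  ∫ x in Icc (0:ℝ) 1, (hpcFun k x : ℂ) * Complex.exp (Complex.I * (2 * Real.pi * t : ℝ) * x)

theorem chCoef_eq (t : ℝ) (k : ℕ) : chCoef t k =
    (if k = 0 then 1 else (Real.sqrt 2 : ℂ)) * cosInt (2 * Real.pi * t) (Real.pi * k) := by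
  rw [chCoef, integral_Icc_eq_integral_Ioc, ← intervalIntegral.integral_of_le zero_le_one, cosInt,
    ← intervalIntegral.integral_const_mul]
  refine intervalIntegral.integral_congr fun x _ => ?_
  rcases eq_or_ne k 0 with rfl | hk
  · simp [hpcFun]
  · simp [hpcFun, hk, mul_assoc]

theorem sqrt_two_le : Real.sqrt 2 ≤ 2 := by
  rw [Real.sqrt_le_left (by norm_num)]; norm_num

theorem norm_chCoef_le (t : ℝ) (k : ℕ) :
    ‖chCoef t k‖ ≤ 200 * (1 + t ^ 2) * (1 + (k:ℝ) ^ 2)⁻¹ := by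
  rw [chCoef_eq, norm_mul]
  have h1 : ‖(if k = 0 then 1 else (Real.sqrt 2 : ℂ))‖ ≤ 2 := by
    split_ifs
    · simp
    · rw [Complex.norm_real, Real.norm_of_nonneg (Real.sqrt_nonneg _)]; exact sqrt_two_le
  have h2 := norm_cosInt_le' (2 * Real.pi * t) k
  rw [Int.cast_natCast] at h2
  calc _ ≤ 2 * (2 * (1 + (2 * Real.pi * t) ^ 2) * (1 + (k:ℝ) ^ 2)⁻¹) := by gcongr
    _ = (4 * (1 + (2 * Real.pi * t) ^ 2)) * (1 + (k:ℝ) ^ 2)⁻¹ := by ring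
    _ ≤ _ := by
      refine mul_le_mul_of_nonneg_right ?_ (by positivity)
      have : Real.pi ^ 2 ≤ 12 := by nlinarith [Real.pi_gt_three, Real.pi_lt_d2]
      nlinarith [sq_nonneg t, mul_le_mul_of_nonneg_right this (sq_nonneg t)]

theorem abs_hpcFun_le (k : ℕ) (x : ℝ) : |hpcFun k x| ≤ 2 := by
  unfold hpcFun
  split_ifs
  · simp
  · rw [abs_mul, abs_of_nonneg (Real.sqrt_nonneg _)]
    nlinarith [sqrt_two_le, Real.abs_cos_le_one (Real.pi * k * x), Real.sqrt_nonneg 2,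
      abs_nonneg (Real.cos (Real.pi * k * x))]

theorem hasSum_chCoef (t x : ℝ) (hx : x ∈ Icc (0:ℝ) 1) :
    HasSum (fun k : ℕ => chCoef t k * (hpcFun k x : ℂ))
      (Complex.exp (Complex.I * (2 * Real.pi * t : ℝ) * x)) := by
  have h := (hasSum_int (2 * Real.pi * t) x hx).nat_add_neg
  have h' := h.sub (hasSum_ite_eq (0:ℕ) (cosInt (2 * Real.pi * t) 0))
  convert! h' using 1
  · funext k
    rw [chCoef_eq]
    rcases eq_or_ne k 0 with rfl | hk
    · simp [hpcFun]
    · have hs : ((Real.sqrt 2 : ℝ) : ℂ) * ((Real.sqrt 2 : ℝ) : ℂ) = 2 := by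
        rw [← Complex.ofReal_mul, Real.mul_self_sqrt (by norm_num)]; norm_num
      simp only [hk, if_false, hpcFun, sub_zero]
      push_cast
      rw [mul_neg, cosInt_neg, Complex.cos,
        show Complex.I * (Real.pi * -(k:ℂ) * (x:ℂ)) = -(Real.pi * k * x) * Complex.I by ring,
        show Complex.I * (Real.pi * (k:ℂ) * (x:ℂ)) = (Real.pi * k * x) * Complex.I by ring]
      linear_combination (cosInt (2 * Real.pi * t) (Real.pi * k) *
        (Complex.exp (Real.pi * k * x * Complex.I) +
          Complex.exp (-(Real.pi * k * x) * Complex.I)) / 2) * hs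
  · simp

theorem continuous_chCoef (k : ℕ) : Continuous (fun t => chCoef t k) := by
  simp only [chCoef_eq, cosInt]
  refine Continuous.mul continuous_const ?_
  exact intervalIntegral.continuous_parametric_intervalIntegral_of_continuous' (by fun_prop) _ _

theorem hasSum_prod_fin (d : ℕ) (u : Fin d → ℕ → ℂ) (s : Fin d → ℂ)
    (hn : ∀ i, Summable (fun k => ‖u i k‖)) (hs : ∀ i, HasSum (u i) (s i)) :
    Summable (fun k : Fin d → ℕ => ‖∏ i, u i (k i)‖) ∧
      HasSum (fun k : Fin d → ℕ => ∏ i, u i (k i)) (∏ i, s i) := by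
  induction d with
  | zero =>
    constructor
    · exact (hasSum_fintype _).summable
    · simp
  | succ d ih =>
    obtain ⟨h1, h2⟩ := ih (fun i => u i.succ) (fun i => s i.succ) (fun i => hn _) (fun i => hs _)
    have hN := (hn 0).mul_norm h1
    have hH := (hs 0).mul h2 hN.of_norm
    let e : ℕ × (Fin d → ℕ) ≃ (Fin (d + 1) → ℕ) := Fin.consEquiv (fun _ => ℕ)
    constructor
    · rw [← e.summable_iff]
      convert! hN using 2 with p
      simp [e, Fin.prod_univ_succ, Fin.consEquiv]
    · rw [← e.hasSum_iff, Fin.prod_univ_succ]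
      convert! hH using 2 with p
      simp [e, Fin.prod_univ_succ, Fin.consEquiv]

theorem schwartz_rep (d : ℕ) (η : SchwartzMap (Fin d → ℝ) ℂ) :
    ∃ h : SchwartzMap (EuclideanSpace ℝ (Fin d)) ℂ, ∀ x : Fin d → ℝ,
      η x = ∫ ξ, h ξ * ∏ i, Complex.exp (Complex.I * (2 * Real.pi * ξ i : ℝ) * x i) := by
  let η' : SchwartzMap (EuclideanSpace ℝ (Fin d)) ℂ :=
    SchwartzMap.compCLMOfContinuousLinearEquiv ℂ (EuclideanSpace.equiv (Fin d) ℝ) η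
  refine ⟨FourierTransform.fourier η', fun x => ?_⟩
  have h1 : FourierTransformInv.fourierInv (FourierTransform.fourier η') = η' :=
    FourierTransform.fourierInv_fourier_eq η'
  have h2 : η x = η' (WithLp.toLp 2 x) := rfl
  rw [h2, ← h1, SchwartzMap.fourierInv_coe, h1, Real.fourierInv_eq']
  refine integral_congr_ae (Filter.Eventually.of_forall fun ξ => ?_)
  simp only [smul_eq_mul]
  rw [mul_comm, ← Complex.exp_sum]
  congr 2
  simp only [PiLp.inner_apply, RCLike.inner_apply, conj_trivial]
  push_cast
  rw [Finset.mul_sum, Finset.sum_mul]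
  refine Finset.sum_congr rfl fun i _ => ?_
  ring

theorem integrable_weight (d : ℕ) (h : SchwartzMap (EuclideanSpace ℝ (Fin d)) ℂ) :
    Integrable (fun ξ => ‖h ξ‖ * ∏ i, (200 * (1 + (ξ i) ^ 2))) := by
  have hb : Integrable (fun ξ : EuclideanSpace ℝ (Fin d) =>
      (200 ^ d * 2 ^ d) * (‖ξ‖ ^ 0 * ‖h ξ‖ + ‖ξ‖ ^ (2 * d) * ‖h ξ‖)) :=
    ((h.integrable_pow_mul volume 0).add (h.integrable_pow_mul volume (2 * d))).const_mul _
  refine hb.mono' (Continuous.aestronglyMeasurable ?_) (Filter.Eventually.of_forall fun ξ => ?_)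
  · have := h.continuous
    fun_prop
  · rw [Real.norm_of_nonneg (by positivity)]
    have h1 : ∏ i, (200 * (1 + (ξ i) ^ 2)) ≤ (200 * (1 + ‖ξ‖ ^ 2)) ^ d := by
      calc _ ≤ ∏ i : Fin d, (200 * (1 + ‖ξ‖ ^ 2)) := by
            refine Finset.prod_le_prod (fun i _ => by positivity) fun i _ => ?_
            have := PiLp.norm_apply_le ξ i
            rw [Real.norm_eq_abs] at this
            have := sq_le_sq' (by linarith [neg_abs_le (ξ i), abs_nonneg (ξ i)])
              ((le_abs_self _).trans this)
            linarith
        _ = _ := by simp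
    have h2 : (1 + ‖ξ‖ ^ 2) ^ d ≤ 2 ^ d * (1 + ‖ξ‖ ^ (2 * d)) := by
      rcases le_total (‖ξ‖ ^ 2) 1 with hl | hl
      · calc _ ≤ (2:ℝ) ^ d := by gcongr; linarith
          _ ≤ _ := le_mul_of_one_le_right (by positivity) (by
            have : (0:ℝ) ≤ ‖ξ‖ ^ (2 * d) := by positivity
            linarith)
      · calc _ ≤ (2 * ‖ξ‖ ^ 2) ^ d := by gcongr; linarith
          _ = 2 ^ d * ‖ξ‖ ^ (2 * d) := by rw [mul_pow, pow_mul]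
          _ ≤ _ := by gcongr; linarith
    calc _ ≤ ‖h ξ‖ * (200 * (1 + ‖ξ‖ ^ 2)) ^ d := by gcongr
      _ = ‖h ξ‖ * 200 ^ d * (1 + ‖ξ‖ ^ 2) ^ d := by rw [mul_pow]; ring
      _ ≤ ‖h ξ‖ * 200 ^ d * (2 ^ d * (1 + ‖ξ‖ ^ (2 * d))) := by gcongr
      _ = _ := by ring

/-- The coefficient expressed on the frequency side. -/
noncomputable def freqCoef (d : ℕ) (h : SchwartzMap (EuclideanSpace ℝ (Fin d)) ℂ)
    (k : Fin d → ℕ) : ℂ :=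
  ∫ ξ, h ξ * ∏ i, chCoef (ξ i) (k i)

theorem norm_term_le (d : ℕ) (h : SchwartzMap (EuclideanSpace ℝ (Fin d)) ℂ)
    (k : Fin d → ℕ) (ξ : EuclideanSpace ℝ (Fin d)) :
    ‖h ξ * ∏ i, chCoef (ξ i) (k i)‖ ≤
      (‖h ξ‖ * ∏ i, (200 * (1 + (ξ i) ^ 2))) * ∏ i, (1 + (k i : ℝ) ^ 2)⁻¹ := by
  rw [norm_mul, norm_prod, mul_assoc, ← Finset.prod_mul_distrib]
  gcongr with i
  exact norm_chCoef_le _ _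

theorem integrable_term (d : ℕ) (h : SchwartzMap (EuclideanSpace ℝ (Fin d)) ℂ)
    (k : Fin d → ℕ) : Integrable (fun ξ => h ξ * ∏ i, chCoef (ξ i) (k i)) := by
  refine ((integrable_weight d h).mul_const (∏ i, (1 + (k i : ℝ) ^ 2)⁻¹)).mono'
    (Continuous.aestronglyMeasurable ?_) (Filter.Eventually.of_forall fun ξ => norm_term_le d h k ξ)
  refine h.continuous.mul (continuous_finsetProd _ fun i _ => ?_)
  exact (continuous_chCoef (k i)).comp (by fun_prop)

theorem summable_prod_w (d : ℕ) :
    Summable (fun k : Fin d → ℕ => ∏ i, (1 + (k i : ℝ) ^ 2)⁻¹) := by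
  have hn : ∀ n : ℕ, ‖(((1 + (n : ℝ) ^ 2)⁻¹ : ℝ) : ℂ)‖ = (1 + (n : ℝ) ^ 2)⁻¹ := fun n => by
    rw [Complex.norm_real, Real.norm_of_nonneg (by positivity)]
  have hw : Summable (fun n : ℕ => ‖(((1 + (n : ℝ) ^ 2)⁻¹ : ℝ) : ℂ)‖) := by
    simp only [hn]; exact summable_w
  have := (hasSum_prod_fin d (fun _ n => (((1 + (n : ℝ) ^ 2)⁻¹ : ℝ) : ℂ)) _ (fun _ => hw)
    (fun _ => hw.of_norm.hasSum)).1
  simpa only [norm_prod, hn] using this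

theorem abs_hpc_le (d : ℕ) (k : Fin d → ℕ) (x : Fin d → ℝ) : ‖(hpc d k x : ℂ)‖ ≤ 2 ^ d := by
  rw [Complex.norm_real, hpc, norm_prod]
  calc _ ≤ ∏ _i : Fin d, (2:ℝ) :=
        Finset.prod_le_prod (fun i _ => norm_nonneg _) fun i _ => abs_hpcFun_le _ _
    _ = _ := by simp

theorem continuous_hpc (d : ℕ) (k : Fin d → ℕ) : Continuous (fun x => (hpc d k x : ℂ)) := by
  refine Complex.continuous_ofReal.comp ?_
  unfold hpc
  refine continuous_finsetProd _ fun i _ => ?_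
  unfold hpcFun
  split_ifs
  · exact continuous_const
  · fun_prop

theorem freqCoef_bound (d : ℕ) (h : SchwartzMap (EuclideanSpace ℝ (Fin d)) ℂ)
    (k : Fin d → ℕ) : ∫ ξ, ‖h ξ * ∏ i, chCoef (ξ i) (k i)‖ ≤
      (∫ ξ, ‖h ξ‖ * ∏ i, (200 * (1 + (ξ i) ^ 2))) * ∏ i, (1 + (k i : ℝ) ^ 2)⁻¹ := by
  rw [← integral_mul_const]
  exact integral_mono (integrable_term d h k).norm ((integrable_weight d h).mul_const _)
    (norm_term_le d h k)

theorem coef_eq (d : ℕ) (η : SchwartzMap (Fin d → ℝ) ℂ)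
    (h : SchwartzMap (EuclideanSpace ℝ (Fin d)) ℂ)
    (hh : ∀ x : Fin d → ℝ,
      η x = ∫ ξ, h ξ * ∏ i, Complex.exp (Complex.I * (2 * Real.pi * ξ i : ℝ) * x i))
    (k : Fin d → ℕ) :
    ∫ x in Icc (0 : Fin d → ℝ) 1, (hpc d k x : ℂ) * η x = freqCoef d h k := by
  have : IsFiniteMeasure (volume.restrict (Icc (0 : Fin d → ℝ) 1)) :=
    ⟨by rw [Measure.restrict_apply_univ]; exact isCompact_Icc.measure_lt_top⟩
  simp only [hh, ← integral_const_mul]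
  rw [integral_integral_swap]
  · rw [freqCoef]
    refine integral_congr_ae (Filter.Eventually.of_forall fun ξ => ?_)
    simp only [mul_left_comm _ (h ξ)]
    rw [integral_const_mul]
    congr 1
    have hm : volume.restrict (Icc (0 : Fin d → ℝ) 1) =
        Measure.pi (fun _ : Fin d => volume.restrict (Icc (0:ℝ) 1)) := by
      rw [← Measure.restrict_pi_pi, ← volume_pi]
      congr 1
      exact (Set.pi_univ_Icc (0 : Fin d → ℝ) 1).symm
    simp only [chCoef]
    rw [hm, ← integral_fintype_prod_eq_prod]
    refine integral_congr_ae (Filter.Eventually.of_forall fun x => ?_)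
    simp only [hpc]
    push_cast
    rw [Finset.prod_mul_distrib]
  · have h1 : Integrable (fun p : (Fin d → ℝ) × EuclideanSpace ℝ (Fin d) => (1:ℂ) * h p.2)
        ((volume.restrict (Icc (0 : Fin d → ℝ) 1)).prod volume) :=
      Integrable.mul_prod (integrable_const (1:ℂ)) (h.integrable)
    have hc := continuous_hpc d k
    refine (h1.norm.const_mul (2 ^ d)).mono' (Continuous.aestronglyMeasurable ?_)
      (Filter.Eventually.of_forall fun p => ?_)
    · have := h.continuous
      refine (hc.comp continuous_fst).mul ((this.comp continuous_snd).mul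
        (continuous_finsetProd _ fun i _ => ?_))
      fun_prop
    · simp only [Function.uncurry]
      rw [norm_mul, norm_mul, norm_prod, one_mul]
      simp only [norm_expI, Finset.prod_const_one, mul_one]
      gcongr
      exact abs_hpc_le d k p.1

theorem hasSum_point (d : ℕ) (η : SchwartzMap (Fin d → ℝ) ℂ)
    (h : SchwartzMap (EuclideanSpace ℝ (Fin d)) ℂ)
    (hh : ∀ x : Fin d → ℝ,
      η x = ∫ ξ, h ξ * ∏ i, Complex.exp (Complex.I * (2 * Real.pi * ξ i : ℝ) * x i))
    (x : Fin d → ℝ) (hx : x ∈ Icc (0 : Fin d → ℝ) 1) :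
    HasSum (fun k : Fin d → ℕ => freqCoef d h k * (hpc d k x : ℂ)) (η x) := by
  have key := hasSum_integral_of_summable_integral_norm (μ := volume)
    (F := fun (k : Fin d → ℕ) (ξ : EuclideanSpace ℝ (Fin d)) =>
      (h ξ * ∏ i, chCoef (ξ i) (k i)) * (hpc d k x : ℂ))
    (fun k => (integrable_term d h k).mul_const _) (by
      refine Summable.of_nonneg_of_le (fun k => integral_nonneg fun _ => norm_nonneg _)
        (fun k => ?_) (((summable_prod_w d).mul_left
          (∫ ξ, ‖h ξ‖ * ∏ i, (200 * (1 + (ξ i) ^ 2)))).mul_right (2 ^ d))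
      simp only [norm_mul _ (hpc d k x : ℂ)]
      rw [integral_mul_const]
      exact mul_le_mul (freqCoef_bound d h k) (abs_hpc_le d k x) (norm_nonneg _)
        ((integral_nonneg fun _ => norm_nonneg _).trans (freqCoef_bound d h k)))
  simp only [integral_mul_const] at key
  convert! key using 1
  rw [hh x]
  refine integral_congr_ae (Filter.Eventually.of_forall fun ξ => ?_)
  have hs : ∀ i, Summable (fun n : ℕ => ‖chCoef (ξ i) n * (hpcFun n (x i) : ℂ)‖) := fun i => by
    refine Summable.of_nonneg_of_le (fun _ => norm_nonneg _) (fun n => ?_)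
      ((summable_w.mul_left (200 * (1 + (ξ i) ^ 2))).mul_right 2)
    rw [norm_mul, Complex.norm_real]
    exact mul_le_mul (norm_chCoef_le _ _) (abs_hpcFun_le _ _) (norm_nonneg _) (by positivity)
  have hp := (hasSum_prod_fin d (fun i n => chCoef (ξ i) n * (hpcFun n (x i) : ℂ)) _ hs
    (fun i => hasSum_chCoef (ξ i) (x i) ⟨hx.1 i, hx.2 i⟩)).2
  have hp' := (hp.mul_left (h ξ)).tsum_eq
  simp only
  rw [← hp']
  refine tsum_congr fun k => ?_
  simp only [hpc]
  push_cast
  rw [Finset.prod_mul_distrib, mul_assoc]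

theorem statement6 (d : ℕ) (f : (Fin d → ℝ) → ℂ)
    (hf : IntegrableOn f (Icc 0 1)) (η : SchwartzMap (Fin d → ℝ) ℂ) :
    Summable (fun k : Fin d → ℕ =>
      ‖(∫ x in Icc (0 : Fin d → ℝ) 1, f x * (hpc d k x : ℂ)) *
        (∫ x in Icc (0 : Fin d → ℝ) 1, (hpc d k x : ℂ) * η x)‖) ∧
    ∑' k : Fin d → ℕ,
        (∫ x in Icc (0 : Fin d → ℝ) 1, f x * (hpc d k x : ℂ)) *
          (∫ x in Icc (0 : Fin d → ℝ) 1, (hpc d k x : ℂ) * η x) =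
      ∫ x in Icc (0 : Fin d → ℝ) 1, f x * η x := by
  obtain ⟨h, hh⟩ := schwartz_rep d η
  simp only [coef_eq d η h hh]
  have hint : ∀ k : Fin d → ℕ, Integrable (fun x => f x * (hpc d k x : ℂ) * freqCoef d h k)
      (volume.restrict (Icc (0 : Fin d → ℝ) 1)) := fun k =>
    (Integrable.mul_bdd (c := 2 ^ d) hf (continuous_hpc d k).aestronglyMeasurable
      (Filter.Eventually.of_forall fun x => abs_hpc_le d k x)).mul_const _
  have hsum : Summable (fun k : Fin d → ℕ => ∫ x in Icc (0 : Fin d → ℝ) 1,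
      ‖f x * (hpc d k x : ℂ) * freqCoef d h k‖) := by
    refine Summable.of_nonneg_of_le (fun k => integral_nonneg fun _ => norm_nonneg _)
        (fun k => ?_) (((summable_prod_w d).mul_left
          (∫ ξ, ‖h ξ‖ * ∏ i, (200 * (1 + (ξ i) ^ 2)))).mul_left
            ((∫ x in Icc (0 : Fin d → ℝ) 1, ‖f x‖) * 2 ^ d))
    have hb : ‖freqCoef d h k‖ ≤ _ :=
      (norm_integral_le_integral_norm _).trans (freqCoef_bound d h k)
    rw [mul_assoc, ← integral_mul_const]
    refine integral_mono (hint k).norm (hf.norm.mul_const _) fun x => ?_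
    simp only
    rw [norm_mul, norm_mul, mul_assoc]
    refine mul_le_mul_of_nonneg_left ?_ (norm_nonneg _)
    exact mul_le_mul (abs_hpc_le d k x) hb (norm_nonneg _) (by positivity)
  have key := hasSum_integral_of_summable_integral_norm hint hsum
  simp only [← integral_mul_const]
  constructor
  · exact Summable.of_nonneg_of_le (fun _ => norm_nonneg _)
      (fun k => norm_integral_le_integral_norm _) hsum
  · rw [key.tsum_eq]
    refine setIntegral_congr_fun measurableSet_Icc fun x hx => ?_
    have hp := ((hasSum_point d η h hh x hx).mul_left (f x)).tsum_eq
    rw [← hp]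
    exact tsum_congr fun k => by ring
end

section
/- Let d ∈ ℕ, 0 < p ≤ ∞, f ∈ L¹([0,1]^d), and let S ⊂ ℕ₀^d be a finite set. Set g := f ∘ φ, let ĝ(m̄) := ∫_{[0,1]^d} g(y) e^{-2πi m̄·y} dy denote the Fourier coefficients of g viewed as a 1-periodic function, and let |m̄| := (|m₁|,…,|m_d|). Then ‖ f - Σ_{k̄ ∈ S} (∫_{[0,1]^d} f c_{k̄}) c_{k̄} ‖_{L_p([0,1]^d)} = ‖ g - Σ_{m̄ ∈ ℤ^d, |m̄| ∈ S} ĝ(m̄) e^{2πi m̄·(·)} ‖_{L_p([0,1]^d)}; that is, the L_p error of half-period cosine approximation of f equals the L_p error of the corresponding Fourier approximation of the tent-transformed function f ∘ φ. -/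
open MeasureTheory Set
open scoped ENNReal

/-- The tent transform `φ(x)ᵢ = 1 - |2xᵢ - 1|`. -/
def tent (d : ℕ) (x : Fin d → ℝ) : Fin d → ℝ :=
  fun i => 1 - |2 * x i - 1|

lemma tent1_mp : MeasurePreserving (fun x : ℝ => 1 - |2 * x - 1|)
    (volume.restrict (Icc 0 1)) (volume.restrict (Icc 0 1)) := by
  have hm : Measurable (fun x : ℝ => 1 - |2 * x - 1|) := by fun_prop
  refine ⟨hm, ?_⟩
  ext A hA
  rw [Measure.map_apply hm hA, Measure.restrict_apply (hm hA), Measure.restrict_apply hA]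
  have h1 : volume ((fun x : ℝ => 2 * x) ⁻¹' (A ∩ Icc 0 1))
      = ENNReal.ofReal (1/2) * volume (A ∩ Icc 0 1) := by
    rw [Real.volume_preimage_mul_left (by norm_num)]; norm_num
  have h2 : volume ((fun x : ℝ => -2 * x) ⁻¹' ((fun x : ℝ => 2 + x) ⁻¹' (A ∩ Ico 0 1)))
      = ENNReal.ofReal (1/2) * volume (A ∩ Icc 0 1) := by
    rw [Real.volume_preimage_mul_left (by norm_num), measure_preimage_add]
    have : volume (A ∩ Ico (0:ℝ) 1) = volume (A ∩ Icc 0 1) :=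
      measure_congr ((ae_eq_refl A).inter Ico_ae_eq_Icc)
    rw [this, abs_of_neg (by norm_num)]; norm_num
  have h3 : (fun x : ℝ => 1 - |2 * x - 1|) ⁻¹' A ∩ Icc 0 1 =
      ((fun x : ℝ => 2 * x) ⁻¹' (A ∩ Icc 0 1)) ∪
      ((fun x : ℝ => -2 * x) ⁻¹' ((fun x : ℝ => 2 + x) ⁻¹' (A ∩ Ico 0 1))) := by
    ext x
    simp only [mem_inter_iff, mem_preimage, mem_union, mem_Icc, mem_Ico]
    rcases le_or_gt x (1/2) with h | h
    · rw [abs_of_nonpos (by linarith), show 1 - -(2 * x - 1) = 2 * x by ring]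
      constructor
      · rintro ⟨a, b, c⟩; exact Or.inl ⟨a, by linarith, by linarith⟩
      · rintro (⟨a, b, c⟩ | ⟨a, b, c⟩)
        · exact ⟨a, by linarith, by linarith⟩
        · exfalso; linarith
    · rw [abs_of_pos (by linarith), show 1 - (2 * x - 1) = 2 + -2 * x by ring]
      constructor
      · rintro ⟨a, b, c⟩; exact Or.inr ⟨a, by linarith, by linarith⟩
      · rintro (⟨a, b, c⟩ | ⟨a, b, c⟩)
        · exfalso; linarith
        · exact ⟨a, by linarith, by linarith⟩
  rw [h3, measure_union, h1, h2, ← add_mul, ← ENNReal.ofReal_add (by norm_num) (by norm_num)]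
  · norm_num
  · rw [Set.disjoint_left]
    intro x hx hy
    simp only [mem_inter_iff, mem_preimage, mem_Icc, mem_Ico] at hx hy
    linarith [hx.2.2, hy.2.2]
  · have : MeasurableSet (A ∩ Ico (0:ℝ) 1) := hA.inter measurableSet_Ico
    exact (by fun_prop : Measurable (fun x : ℝ => -2 * x))
      ((by fun_prop : Measurable (fun x : ℝ => 2 + x)) this)

lemma refl1_mp : MeasurePreserving (fun x : ℝ => 1 - x)
    (volume.restrict (Icc 0 1)) (volume.restrict (Icc 0 1)) := by
  have h := (Measure.measurePreserving_sub_left (volume : Measure ℝ) 1).restrict_preimage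
    (measurableSet_Icc (a := (0:ℝ)) (b := 1))
  simpa using h

lemma cube_eq (d : ℕ) : (volume : Measure (Fin d → ℝ)).restrict (Icc 0 1) =
    Measure.pi (fun _ : Fin d => (volume : Measure ℝ).restrict (Icc 0 1)) := by
  rw [← Measure.restrict_pi_pi, pi_univ_Icc]; rfl

lemma tent_mp (d : ℕ) : MeasurePreserving (tent d)
    (volume.restrict (Icc 0 1)) (volume.restrict (Icc 0 1)) := by
  rw [cube_eq]
  exact measurePreserving_pi _ _ (fun _ => tent1_mp)

/-- reflection of coordinate `j` -/
def rfl1 (d : ℕ) (j : Fin d) (x : Fin d → ℝ) : Fin d → ℝ :=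
  fun i => if i = j then 1 - x i else x i

lemma rfl1_mp (d : ℕ) (j : Fin d) : MeasurePreserving (rfl1 d j)
    (volume.restrict (Icc 0 1)) (volume.restrict (Icc 0 1)) := by
  rw [cube_eq]
  refine measurePreserving_pi _ _ (f := fun i y => if i = j then 1 - y else y) (fun i => ?_)
  by_cases h : i = j
  · simpa [h] using refl1_mp
  · simp only [h, if_false]
    exact MeasurePreserving.id _

lemma tent_rfl1 (d : ℕ) (j : Fin d) (x : Fin d → ℝ) : tent d (rfl1 d j x) = tent d x := by
  ext i
  simp only [tent, rfl1]
  split_ifs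
  · rw [← abs_neg]; ring_nf
  · rfl

lemma int_mul (d : ℕ) (g : (Fin d → ℝ) → ℂ) (hg : IntegrableOn g (Icc 0 1))
    (h : (Fin d → ℝ) → ℂ) (hh : Continuous h) :
    IntegrableOn (fun y => g y * h y) (Icc 0 1) :=
  hg.mul_continuousOn hh.continuousOn isCompact_Icc

lemma sym_step (d : ℕ) (g : (Fin d → ℝ) → ℂ) (hg : IntegrableOn g (Icc 0 1))
    (hs : ∀ j x, g (rfl1 d j x) = g x) (u : Fin d → ℝ → ℂ) (hu : ∀ i, Continuous (u i))
    (j : Fin d) :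
    ∫ y in Icc (0 : Fin d → ℝ) 1, g y * ∏ i, u i (y i) =
    ∫ y in Icc (0 : Fin d → ℝ) 1, g y *
      ∏ i, (if i = j then (u i (y i) + u i (1 - y i)) / 2 else u i (y i)) := by
  set F : (Fin d → ℝ) → ℂ := fun y => g y * ∏ i, u i (y i) with hF
  have iF : IntegrableOn F (Icc 0 1) := int_mul d g hg _ (by fun_prop)
  have hmp := rfl1_mp d j
  have iF2 : IntegrableOn (fun y => F (rfl1 d j y)) (Icc 0 1) := hmp.integrable_comp_of_integrable iF
  have e : ∫ y in Icc (0 : Fin d → ℝ) 1, F (rfl1 d j y) = ∫ y in Icc (0 : Fin d → ℝ) 1, F y := by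
    have := integral_map (μ := volume.restrict (Icc (0 : Fin d → ℝ) 1)) (f := F)
      hmp.measurable.aemeasurable (by rw [hmp.map_eq]; exact iF.aestronglyMeasurable)
    rw [← this, hmp.map_eq]
  have : ∀ y, g y * ∏ i, (if i = j then (u i (y i) + u i (1 - y i)) / 2 else u i (y i))
      = (F y + F (rfl1 d j y)) / 2 := by
    intro y
    simp only [hF, hs]
    rw [← Finset.mul_prod_erase _ _ (Finset.mem_univ j),
      ← Finset.mul_prod_erase _ (fun i => u i (y i)) (Finset.mem_univ j),
      ← Finset.mul_prod_erase _ (fun i => u i (rfl1 d j y i)) (Finset.mem_univ j)]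
    have a1 : ∏ i ∈ Finset.univ.erase j, (if i = j then (u i (y i) + u i (1 - y i)) / 2 else u i (y i))
        = ∏ i ∈ Finset.univ.erase j, u i (y i) :=
      Finset.prod_congr rfl (fun i hi => by rw [if_neg (Finset.ne_of_mem_erase hi)])
    have a2 : ∏ i ∈ Finset.univ.erase j, u i (rfl1 d j y i)
        = ∏ i ∈ Finset.univ.erase j, u i (y i) :=
      Finset.prod_congr rfl (fun i hi => by rw [rfl1, if_neg (Finset.ne_of_mem_erase hi)])
    rw [a1, a2]
    simp only [rfl1, if_true]
    ring
  simp_rw [this]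
  rw [integral_div, integral_add iF iF2, e]
  ring

lemma sym_all (d : ℕ) (g : (Fin d → ℝ) → ℂ) (hg : IntegrableOn g (Icc 0 1))
    (hs : ∀ j x, g (rfl1 d j x) = g x) (u : Fin d → ℝ → ℂ) (hu : ∀ i, Continuous (u i))
    (s : Finset (Fin d)) :
    ∫ y in Icc (0 : Fin d → ℝ) 1, g y * ∏ i, u i (y i) =
    ∫ y in Icc (0 : Fin d → ℝ) 1, g y *
      ∏ i, (if i ∈ s then (u i (y i) + u i (1 - y i)) / 2 else u i (y i)) := by
  induction s using Finset.induction_on with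
  | empty => simp
  | insert j s hj ih =>
    rw [ih, sym_step d g hg hs
      (fun i t => if i ∈ s then (u i t + u i (1 - t)) / 2 else u i t) _ j]
    · congr 1; ext y; congr 1
      refine Finset.prod_congr rfl fun i _ => ?_
      by_cases h : i = j
      · subst h; simp [hj]
      · simp [h]
    · intro i
      have := hu i
      by_cases h : i ∈ s
      · simp only [h, if_true]; fun_prop
      · simpa only [h, if_false] using this

lemma cos_tent (m : ℤ) (x : ℝ) :
    Real.cos (Real.pi * (m.natAbs : ℝ) * (1 - |2 * x - 1|)) = Real.cos (2 * Real.pi * m * x) := by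
  have hm : Real.cos (Real.pi * (m.natAbs : ℝ) * (1 - |2 * x - 1|))
      = Real.cos (Real.pi * m * (1 - |2 * x - 1|)) := by
    rcases Int.natAbs_eq m with h | h
    · conv_rhs => rw [h]
      simp
    · conv_rhs => rw [h]
      rw [← Real.cos_neg, Int.cast_neg, Int.cast_natCast]
      congr 1
      ring
  rw [hm]
  rcases abs_cases (2 * x - 1) with ⟨h, _⟩ | ⟨h, _⟩ <;> rw [h]
  · rw [show Real.pi * m * (1 - (2 * x - 1)) = m * (2 * Real.pi) - 2 * Real.pi * m * x by ring,
      Real.cos_int_mul_two_pi_sub]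
  · congr 1; ring

/-- normalising weight -/
noncomputable def wt (k : ℕ) : ℝ := if k = 0 then 1 else Real.sqrt 2

lemma wt_ne (k : ℕ) : wt k ≠ 0 := by
  unfold wt; split_ifs <;> simp

lemma wt_mul (m : ℤ) (x : ℝ) :
    hpcFun m.natAbs (1 - |2 * x - 1|) = wt m.natAbs * Real.cos (2 * Real.pi * m * x) := by
  rw [← cos_tent]
  unfold hpcFun wt
  split_ifs with h
  · simp [h]
  · rfl

lemma sum_pm (k : ℕ) (x : ℝ) :
    ∑ m ∈ ({(k : ℤ), -(k : ℤ)} : Finset ℤ), Complex.exp (2 * Real.pi * Complex.I * ((m : ℂ) * x))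
      = (wt k * hpcFun k (1 - |2 * x - 1|) : ℝ) := by
  have := wt_mul k x
  rw [Int.natAbs_natCast] at this
  rw [this]
  by_cases h : k = 0
  · simp [h, wt]
  · rw [Finset.sum_pair (by omega), ← mul_assoc (wt k)]
    simp only [wt, if_neg h]
    rw [Real.mul_self_sqrt (by norm_num)]
    push_cast
    rw [Complex.two_cos]
    congr 2 <;> ring

lemma sym_exp (m : ℤ) (x : ℝ) :
    (Complex.exp (-(2 * Real.pi * Complex.I) * ((m : ℂ) * x)) +
      Complex.exp (-(2 * Real.pi * Complex.I) * ((m : ℂ) * ((1 - x : ℝ) : ℂ)))) / 2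
      = ((wt m.natAbs)⁻¹ * hpcFun m.natAbs (1 - |2 * x - 1|) : ℝ) := by
  rw [wt_mul, inv_mul_cancel_left₀ (wt_ne _)]
  push_cast
  rw [Complex.cos]
  have : Complex.exp (-(2 * Real.pi * Complex.I) * ((m : ℂ) * (1 - x)))
      = Complex.exp (2 * Real.pi * m * x * Complex.I) := by
    rw [Complex.exp_eq_exp_iff_exists_int]
    exact ⟨-m, by push_cast; ring⟩
  rw [this, add_comm]
  congr 3
  ring

lemma hpc_cont (d : ℕ) (k : Fin d → ℕ) : Continuous (hpc d k) := by
  unfold hpc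
  refine continuous_finsetProd _ fun i _ => ?_
  unfold hpcFun
  split_ifs <;> fun_prop

lemma coeff_eq (d : ℕ) (f : (Fin d → ℝ) → ℂ) (hf : IntegrableOn f (Icc 0 1)) (m : Fin d → ℤ) :
    (∫ y in Icc (0 : Fin d → ℝ) 1, f (tent d y) *
      Complex.exp (-(2 * (Real.pi : ℂ) * Complex.I) * ∑ i, (m i : ℂ) * (y i : ℂ))) =
    (∏ i, (wt (m i).natAbs : ℂ)⁻¹) *
      ∫ y in Icc (0 : Fin d → ℝ) 1, f y * (hpc d (fun i => (m i).natAbs) y : ℂ) := by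
  have hmp := tent_mp d
  simp_rw [Finset.mul_sum, Complex.exp_sum]
  rw [sym_all d (fun y => f (tent d y)) (hmp.integrable_comp_of_integrable hf)
    (fun j x => by simp only [tent_rfl1])
    (fun i t => Complex.exp (-(2 * Real.pi * Complex.I) * ((m i : ℂ) * t)))
    (fun i => by fun_prop) Finset.univ]
  simp only [Finset.mem_univ, if_true, sym_exp]
  set F : (Fin d → ℝ) → ℂ := fun y => f y * (hpc d (fun i => (m i).natAbs) y : ℂ) with hF
  have iF : IntegrableOn F (Icc 0 1) :=
    int_mul d f hf _ (Complex.continuous_ofReal.comp (hpc_cont d _))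
  have e : ∫ y in Icc (0 : Fin d → ℝ) 1, F (tent d y) = ∫ y in Icc (0 : Fin d → ℝ) 1, F y := by
    have := integral_map (μ := volume.restrict (Icc (0 : Fin d → ℝ) 1)) (f := F)
      hmp.measurable.aemeasurable (by rw [hmp.map_eq]; exact iF.aestronglyMeasurable)
    rw [← this, hmp.map_eq]
  rw [← e, ← integral_const_mul]
  congr 1; ext y
  simp only [hF, hpc, tent]
  push_cast
  rw [Finset.prod_mul_distrib]
  ring

/-- The `L_p` error of half-period cosine approximation of `f` (with coefficient
selection `S`) equals the `L_p` error of the corresponding Fourier approximation of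
the tent-transformed function `g = f ∘ φ`. -/
theorem statement12 (d : ℕ) (p : ℝ≥0∞) (hp : 0 < p)
    (f : (Fin d → ℝ) → ℂ) (hf : IntegrableOn f (Icc 0 1))
    (S : Finset (Fin d → ℕ)) :
    eLpNorm (fun x : Fin d → ℝ =>
        f x - ∑ k ∈ S,
          (∫ y in Icc (0 : Fin d → ℝ) 1, f y * (hpc d k y : ℂ)) * (hpc d k x : ℂ))
      p (volume.restrict (Icc (0 : Fin d → ℝ) 1)) =
    eLpNorm (fun x : Fin d → ℝ =>
        f (tent d x) - ∑' m : Fin d → ℤ,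
          if (fun i => (m i).natAbs) ∈ S then
            (∫ y in Icc (0 : Fin d → ℝ) 1,
                f (tent d y) *
                  Complex.exp (-(2 * (Real.pi : ℂ) * Complex.I) * ∑ i, (m i : ℂ) * (y i : ℂ))) *
              Complex.exp ((2 * (Real.pi : ℂ) * Complex.I) * ∑ i, (m i : ℂ) * (x i : ℂ))
          else 0)
      p (volume.restrict (Icc (0 : Fin d → ℝ) 1)) := by
  set A : (Fin d → ℕ) → ℂ :=
    fun k => ∫ y in Icc (0 : Fin d → ℝ) 1, f y * (hpc d k y : ℂ) with hA
  have hmp := tent_mp d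
  rw [← eLpNorm_comp_measurePreserving _ hmp]
  swap
  · refine hf.aestronglyMeasurable.sub (Continuous.aestronglyMeasurable ?_)
    refine continuous_finsetSum _ fun k _ => continuous_const.mul ?_
    exact Complex.continuous_ofReal.comp (hpc_cont d k)
  congr 1
  ext x
  simp only [Function.comp]
  congr 1
  simp_rw [coeff_eq d f hf]
  let P : (Fin d → ℕ) → Finset (Fin d → ℤ) :=
    fun k => Fintype.piFinset fun i => ({(k i : ℤ), -(k i : ℤ)} : Finset ℤ)
  have hP : ∀ k m, m ∈ P k ↔ (fun i => (m i).natAbs) = k := by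
    intro k m
    simp only [P, Fintype.mem_piFinset, Finset.mem_insert, Finset.mem_singleton, funext_iff]
    exact forall_congr' fun i => by omega
  rw [tsum_eq_sum (s := S.biUnion P)]
  swap
  · intro m hm
    rw [if_neg]
    intro h
    exact hm (Finset.mem_biUnion.2 ⟨_, h, (hP _ _).2 rfl⟩)
  rw [Finset.sum_biUnion]
  swap
  · intro k _ l _ hkl
    rw [Function.onFun, Finset.disjoint_left]
    intro m h1 h2
    exact hkl (((hP _ _).1 h1).symm.trans ((hP _ _).1 h2))
  refine Finset.sum_congr rfl fun k hk => ?_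
  have h1 : ∀ m ∈ P k, (if (fun i => (m i).natAbs) ∈ S then
      ((∏ i, (wt (m i).natAbs : ℂ)⁻¹) *
        ∫ y in Icc (0 : Fin d → ℝ) 1, f y * (hpc d (fun i => (m i).natAbs) y : ℂ)) *
        Complex.exp ((2 * (Real.pi : ℂ) * Complex.I) * ∑ i, (m i : ℂ) * (x i : ℂ)) else 0)
      = ((∏ i, (wt (k i) : ℂ)⁻¹) * A k) *
        ∏ i, Complex.exp ((2 * (Real.pi : ℂ) * Complex.I) * ((m i : ℂ) * (x i : ℂ))) := by
    intro m hm
    have h := (hP _ _).1 hm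
    have h' : ∀ i, (m i).natAbs = k i := fun i => congrFun h i
    rw [if_pos (by rw [h]; exact hk), h, Finset.mul_sum, Complex.exp_sum]
    simp only [h', hA]
  rw [Finset.sum_congr rfl h1, ← Finset.mul_sum]
  have h2 := Finset.prod_univ_sum (fun i => ({(k i : ℤ), -(k i : ℤ)} : Finset ℤ))
    (fun i (n : ℤ) => Complex.exp ((2 * (Real.pi : ℂ) * Complex.I) * ((n : ℂ) * (x i : ℂ))))
  rw [← h2]
  simp only [sum_pm]
  have h3 : (∏ i, (wt (k i) : ℂ)) ≠ 0 :=
    Finset.prod_ne_zero_iff.2 fun i _ => by exact_mod_cast wt_ne _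
  change A k * _ = _
  simp only [hpc, tent]
  push_cast
  rw [Finset.prod_mul_distrib, Finset.prod_inv_distrib]
  field_simp
end
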